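/- Let M be a commutative associative ℂ-algebra, E : M → ℂ a linear functional, and let W_n : M^n → Γ(M) be the multilinear maps determined by W() = 1 and the recursion W(a₁,…,a_{n+1}) = W(a₁,…,a_n)·X(a_{n+1}) − E(a_{n+1})·W(a₁,…,a_n) − Σ_{i=1}^n W(a₁,…,â_i,…,a_n, a_i a_{n+1}) − Σ_{i=1}^n E(a_i a_{n+1})·W(a₁,…,â_i,…,a_n). Fix s(1),…,s(k) ≥ 1 with n = s(1)+…+s(k), and let J₁,…,J_k be the consecutive intervals of {1,…,n} of lengths s(1),…,s(k). Then Π_{r=1}^k W(a_i : i ∈ J_r, in increasing order) = Σ_{(π,S)} (Π_{U ∈ π∖S} E(a_U)) · W(a_{V₁},…,a_{V_m}), where the sum is over all (π,S) ∈ IP(n) such that every block of π meets each interval J_r in at most one element and every singleton block of π is open, and V₁,…,V_m are the open blocks listed in increasing order of their largest elements. -/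

import Mathlib

/-!
Generalise the right-hand side to a sum `partSum f T` over the incomplete partitions of an arbitrary
finite set `T` whose points carry colours `f`, where a block may not contain two points of equal
colour and closed blocks are not singletons. For the colouring by the index of the interval and
`T = {1, …, n}` this is the sum of the theorem (`sum_incomplete_eq`).

Incomplete partitions of `T ∪ {j}` arise uniquely from those of `T` (`sum_admSet_insert`): `j` is an
open singleton, or it joins an open block `V` free of its colour, and the block then stays open or
gets closed. Let `x` be larger than all of `T`. Then blocks through `x` come last, and the terms
where `x` joins an open block are those of the two sums subtracted in the recursion for `W`, applied
to the open blocks and `a_x`. They cancel, except that blocks already containing the colour of `x`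
occur only in the recursion (`partSum_insert_last'`).

The heart is `partSum_union`: for a set `J` of one new colour, above `T₀`,
`partSum (T₀ ∪ J) = partSum T₀ * W(a_i : i ∈ J)`. Let `x` be the largest point of `J = J' ∪ {x}`. An
open block containing the colour of `x` has exactly one point `j ∈ J'`, and the total contribution of
the merges of `x` with the open block of `j` is, by inserting `j` in the middle of
`T₀ ∪ (J' \ {j})` (`sum_mergeTerm`), the sum for `T₀ ∪ (J' \ {j}) ∪ {x}` with `a_x` replaced by
`a_j a_x`, plus `E(a_j a_x)` times the sum for `T₀ ∪ (J' \ {j})`. By induction on the size of `J`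
these are `partSum T₀` times the terms of the recursion for `W(a_i : i ∈ J)`. Commutativity of `M`
enters here, as `a_j` and `a_x` are multiplied across the rest of the block. Appending the intervals
one after the other gives the theorem.
-/

open Finset
open scoped Classical

noncomputable section

/-- A partition of `Fin n`, given by its (finite) set of blocks. -/
def IsPartition {n : ℕ} (P : Finset (Finset (Fin n))) : Prop :=
  (∀ B ∈ P, B.Nonempty) ∧ ∀ i : Fin n, ∃! B : Finset (Fin n), B ∈ P ∧ i ∈ B

/-- For `U = {i₁ < … < iₘ}`, the ordered product `a_{i₁} ⋯ a_{iₘ}`. -/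
def aProd {M : Type*} [Ring M] {n : ℕ} (a : Fin n → M) (B : Finset (Fin n)) : M :=
  ((B.sort (· ≤ ·)).map a).prod

/-- The block of `P` containing `i`. -/
def blockOf {n : ℕ} (P : Finset (Finset (Fin n))) (i : Fin n) : Finset (Fin n) :=
  Finset.univ.filter fun x => ∃ B ∈ P, i ∈ B ∧ x ∈ B

/-- The largest elements of the blocks of `T`, in increasing order. -/
def maxElts {n : ℕ} (T : Finset (Finset (Fin n))) : List (Fin n) :=
  (Finset.univ.filter fun i : Fin n => ∃ B ∈ T, i ∈ B ∧ ∀ x ∈ B, x ≤ i).sort (· ≤ ·)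

/-- The number of elements of `{1,…,n}` preceding the `r`-th consecutive interval. -/
def offset {k : ℕ} (s : Fin k → ℕ) (r : Fin k) : ℕ :=
  ∑ i ∈ Finset.univ.filter (fun i => i < r), s i

lemma offset_add_lt {k : ℕ} (s : Fin k → ℕ) (r : Fin k) (j : ℕ) (hj : j < s r) :
    offset s r + j < ∑ i, s i := by
  have h2 : r ∉ Finset.univ.filter (fun i => i < r) := by simp
  have h3 : ∑ i ∈ insert r (Finset.univ.filter (fun i => i < r)), s i ≤ ∑ i, s i :=
    Finset.sum_le_sum_of_subset (Finset.subset_univ _)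
  rw [Finset.sum_insert h2] at h3
  unfold offset
  omega

/-- The `r`-th consecutive interval `J_r` of `{1,…,n}`, of length `s r`. -/
def Jset {k : ℕ} (s : Fin k → ℕ) (n : ℕ) (r : Fin k) : Finset (Fin n) :=
  Finset.univ.filter fun i : Fin n => offset s r ≤ i.val ∧ i.val < offset s r + s r


/-! ### The recursion on lists and on sorted index sets -/

/-- `w` satisfies the defining recursion of the maps `W_n`, read on lists. With lists the arity is
not part of the type, so removing and appending entries needs no casts, and the separate clause
for arity one is absorbed into `snoc`. -/
structure WickRec {M : Type*} [CommRing M] [Algebra ℂ M] (E : M →ₗ[ℂ] ℂ)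
    (w : List M → TensorAlgebra ℂ M) : Prop where
  nil : w [] = 1
  snoc : ∀ (l : List M) (y : M), w (l ++ [y]) =
    w l * TensorAlgebra.ι ℂ y - E y • w l
      - ∑ i : Fin l.length, (w (l.eraseIdx i ++ [l.get i * y]) +
          E (l.get i * y) • w (l.eraseIdx i))

/-- A family of functions on tuples is determined by its values on lists; this moves between the
encoding by `Fin m → M` and the one by `List M`. -/
lemma list_fun_ofFn {M N : Type*} (W : (m : ℕ) → (Fin m → M) → N) (m : ℕ) (a : Fin m → M) :
    W m a = W (List.ofFn a).length (List.ofFn a).get := by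
  have key : ∀ (m' : ℕ) (h : m' = m) (a' : Fin m' → M), (∀ i, a' i = a (Fin.cast h i)) →
      W m a = W m' a' := by
    intro m' h a' h'
    subst h
    congr 1
    funext i
    exact (h' i).symm
  apply key _ (List.length_ofFn)
  intro i
  rw [List.get_ofFn]

lemma ofFn_removeNth {M : Type*} {m : ℕ} (a : Fin (m + 1) → M) (i : Fin (m + 1)) :
    List.ofFn (i.removeNth a) = (List.ofFn a).eraseIdx i := by
  apply List.ext_getElem
  · rw [List.length_eraseIdx, List.length_ofFn, List.length_ofFn, if_pos i.isLt]
    rfl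
  · intro j h1 h2
    simp only [List.getElem_eraseIdx, List.getElem_ofFn, Fin.removeNth, Fin.succAbove, Fin.lt_def]
    split_ifs <;> first | rfl | contradiction

lemma ofFn_snoc {M : Type*} {m : ℕ} (a : Fin m → M) (x : M) :
    List.ofFn (Fin.snoc a x : Fin (m + 1) → M) = List.ofFn a ++ [x] := by
  rw [List.ofFn_succ']
  simp

lemma wickRec_of {M : Type*} [CommRing M] [Algebra ℂ M] (E : M →ₗ[ℂ] ℂ)
    (W : (m : ℕ) → (Fin m → M) → TensorAlgebra ℂ M)
    (hW0 : ∀ a : Fin 0 → M, W 0 a = 1)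
    (hW1 : ∀ a : Fin 1 → M,
      W 1 a = W 0 (Fin.init a) * TensorAlgebra.ι ℂ (a 0)
        - E (a 0) • W 0 (Fin.init a))
    (hWrec : ∀ (m : ℕ) (a : Fin (m + 2) → M),
      W (m + 2) a =
        W (m + 1) (Fin.init a) * TensorAlgebra.ι ℂ (a (Fin.last (m + 1)))
          - E (a (Fin.last (m + 1))) • W (m + 1) (Fin.init a)
          - ∑ i : Fin (m + 1),
              W (m + 1) (Fin.snoc (i.removeNth (Fin.init a))
                (a i.castSucc * a (Fin.last (m + 1))))
          - ∑ i : Fin (m + 1),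
              E (a i.castSucc * a (Fin.last (m + 1))) • W m (i.removeNth (Fin.init a))) :
    WickRec E (fun l => W l.length l.get) := by
  refine ⟨hW0 _, ?_⟩
  intro l y
  obtain ⟨m, hm⟩ : ∃ m, l.length = m := ⟨_, rfl⟩
  obtain ⟨a, rfl⟩ : ∃ a : Fin m → M, l = List.ofFn a := by
    subst hm
    exact ⟨l.get, (List.ofFn_get l).symm⟩
  have e1 : W (List.ofFn a ++ [y]).length (List.ofFn a ++ [y]).get =
      W (m + 1) (Fin.snoc a y : Fin (m + 1) → M) := by
    rw [list_fun_ofFn W (m + 1) (Fin.snoc a y), ofFn_snoc]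
  have e2 : W (List.ofFn a).length (List.ofFn a).get = W m a := (list_fun_ofFn W m a).symm
  have e3 : ∀ F : Fin m → TensorAlgebra ℂ M,
      ∑ i : Fin (List.ofFn a).length, F (Fin.cast List.length_ofFn i) = ∑ i, F i :=
    fun F => Equiv.sum_comp (finCongr List.length_ofFn) F
  rw [e1, e2]
  rcases m with _ | m
  · rw [hW1]
    have : (Fin.init (Fin.snoc a y : Fin 1 → M)) = a := Fin.init_snoc (α := fun _ => M) y a
    rw [this, Finset.sum_eq_zero (fun i _ => (Fin.cast List.length_ofFn i).elim0), sub_zero]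
    rfl
  · rw [hWrec]
    have : (Fin.init (Fin.snoc a y : Fin (m + 2) → M)) = a := Fin.init_snoc (α := fun _ => M) y a
    rw [this, Fin.snoc_last, sub_sub _ (∑ i : Fin (m + 1), _), ← Finset.sum_add_distrib, ← e3]
    congr 1
    refine Finset.sum_congr rfl fun i _ => ?_
    rw [Fin.snoc_castSucc, list_fun_ofFn W, ofFn_snoc, ofFn_removeNth, list_fun_ofFn W m,
      ofFn_removeNth]
    have h3 : a (Fin.cast List.length_ofFn i) = (List.ofFn a).get i := (List.get_ofFn a i).symm
    rw [h3]
    rfl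

/-- The recursion for a list indexed by a finset `K`, sorted along a linear relation `r`: deleting
the entry of index `i` is erasing `i` from `K`. It is used both for the blocks of a partition
(colexicographic order) and for the points of an interval (order of `Fin n`). -/
lemma WickRec.sort {M : Type*} [CommRing M] [Algebra ℂ M] {E : M →ₗ[ℂ] ℂ}
    {w : List M → TensorAlgebra ℂ M} (hw : WickRec E w) {κ : Type*} [DecidableEq κ]
    (r : κ → κ → Prop)
    [DecidableRel r] [IsTrans κ r] [Std.Antisymm r] [Std.Total r] (K : Finset κ) (g : κ → M)
    (y : M) : w ((K.sort r).map g ++ [y]) =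
      w ((K.sort r).map g) * TensorAlgebra.ι ℂ y - E y • w ((K.sort r).map g)
      - ∑ i ∈ K, (w (((K.erase i).sort r).map g ++ [g i * y]) +
          E (g i * y) • w (((K.erase i).sort r).map g)) := by
  rw [hw.snoc]
  congr 1
  have e1 : ∀ i, (K.erase i).sort r = (K.sort r).erase i := by
    intro i
    apply List.Perm.eq_of_pairwise' (r := r) (Finset.pairwise_sort _ _)
      ((Finset.pairwise_sort _ _).sublist List.erase_sublist)
    rw [← Multiset.coe_eq_coe, ← Multiset.coe_erase]
    simp
  have e2 : ∀ h : κ → TensorAlgebra ℂ M, ∑ i ∈ K, h i =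
      ∑ i : Fin ((K.sort r).map g).length, h ((K.sort r).get (Fin.cast (List.length_map g) i)) := by
    intro h
    rw [← Equiv.sum_comp (finCongr (List.length_map (as := K.sort r) g).symm)]
    have := List.sum_toFinset h (K.sort_nodup r)
    rw [Finset.sort_toFinset] at this
    rw [this, ← Fin.sum_univ_fun_getElem]
    rfl
  rw [e2]
  refine Finset.sum_congr rfl fun i _ => ?_
  have h3 : (K.erase ((K.sort r).get (Fin.cast (List.length_map g) i))).sort r
      = (K.sort r).eraseIdx i := by
    rw [e1, List.Nodup.erase_get]
    · rfl
    · exact K.sort_nodup r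
  rw [h3, List.eraseIdx_map]
  simp

lemma sort_insert_last {κ : Type*} [DecidableEq κ]
    (r : κ → κ → Prop)
    [DecidableRel r] [IsTrans κ r] [Std.Antisymm r] [Std.Total r] (K : Finset κ) (x : κ)
    (hx : x ∉ K) (h : ∀ y ∈ K, r y x) : (insert x K).sort r = K.sort r ++ [x] := by
  apply List.Perm.eq_of_pairwise' (r := r) (Finset.pairwise_sort _ _)
  · rw [List.pairwise_append]
    simpa using h
  · rw [List.perm_ext_iff_of_nodup (Finset.sort_nodup _ _)]
    · simp [or_comm]
    · rw [List.nodup_append]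
      simp
      grind

/-! ### Coloured incomplete partitions -/

/-- `(O, C)` is an incomplete partition of the finite set `T` with set of open blocks `O` and set of
closed blocks `C`, such that every block meets each colour class of `f` in at most one element and
no closed block is a singleton. Allowing an arbitrary `T` makes it possible to add the points of
`Fin n` one at a time. -/
structure Adm {n : ℕ} {κ : Type*} (f : Fin n → κ) (T : Finset (Fin n))
    (O C : Finset (Finset (Fin n))) : Prop where
  ne : ∀ B, B ∈ O ∨ B ∈ C → B.Nonempty
  sub : ∀ B, B ∈ O ∨ B ∈ C → B ⊆ T
  inj : ∀ B, B ∈ O ∨ B ∈ C → ∀ x ∈ B, ∀ y ∈ B, f x = f y → x = y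
  cov : ∀ i ∈ T, ∃ B, (B ∈ O ∨ B ∈ C) ∧ i ∈ B
  uniq : ∀ B, B ∈ O ∨ B ∈ C → ∀ B', B' ∈ O ∨ B' ∈ C → ∀ i ∈ B, i ∈ B' → B = B'
  disj : ∀ B ∈ O, B ∉ C
  card : ∀ B ∈ C, ∀ x, B ≠ {x}

section
variable {n : ℕ} {κ : Type*} {f : Fin n → κ} {T : Finset (Fin n)}
    {O C : Finset (Finset (Fin n))} {j : Fin n}

lemma Adm.notMem (h : Adm f T O C) (hj : j ∉ T) {B} (hB : B ∈ O ∨ B ∈ C) : j ∉ B :=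
  fun hjB => hj (h.sub B hB hjB)

/-- The new point `j` forms an open singleton. -/
lemma Adm.ext1 (h : Adm f T O C) (hj : j ∉ T) : Adm f (insert j T) (insert {j} O) C := by
  have hn := fun B => h.notMem hj (B := B)
  obtain ⟨h1, h2, h3, h4, h5, h6, h7⟩ := h
  constructor
  · grind
  · grind
  · grind
  · grind
  · grind
  · grind
  · grind

/-- The new point `j` joins an open block, which stays open. -/
lemma Adm.ext2 (h : Adm f T O C) (hj : j ∉ T) {V} (hV : V ∈ O) (hf : ∀ v ∈ V, f v ≠ f j) :
    Adm f (insert j T) (insert (insert j V) (O.erase V)) C := by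
  have hn := fun B => h.notMem hj (B := B)
  obtain ⟨h1, h2, h3, h4, h5, h6, h7⟩ := h
  constructor
  · grind
  · grind
  · grind
  · grind
  · grind
  · grind
  · grind

/-- The new point `j` joins an open block, which becomes closed. -/
lemma Adm.ext3 (h : Adm f T O C) (hj : j ∉ T) {V} (hV : V ∈ O) (hf : ∀ v ∈ V, f v ≠ f j) :
    Adm f (insert j T) (O.erase V) (insert (insert j V) C) := by
  have hn := fun B => h.notMem hj (B := B)
  obtain ⟨h1, h2, h3, h4, h5, h6, h7⟩ := h
  constructor
  · grind
  · grind
  · grind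
  · grind
  · grind
  · grind
  · intro B hB x
    rcases Finset.mem_insert.1 hB with rfl | hB
    · obtain ⟨v, hv⟩ := h1 V (Or.inl hV)
      intro e
      grind
    · exact h7 B hB x

/-- Undoes `Adm.ext1`. -/
lemma Adm.red1 (h : Adm f (insert j T) O C) (hj : j ∉ T) (hB : {j} ∈ O) :
    Adm f T (O.erase {j}) C := by
  have hn : ∀ B, (B ∈ O ∨ B ∈ C) → j ∈ B → B = {j} := fun B hB' hj' =>
    h.uniq B hB' {j} (Or.inl hB) j hj' (by simp)
  obtain ⟨h1, h2, h3, h4, h5, h6, h7⟩ := h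
  constructor
  · grind
  · intro B hB'
    have : j ∉ B := by grind
    have := h2 B (by grind)
    grind
  · grind
  · intro i hi
    obtain ⟨B, hB1, hB2⟩ := h4 i (by grind)
    exact ⟨B, by grind, hB2⟩
  · grind
  · grind
  · grind

/-- Undoes `Adm.ext2`. -/
lemma Adm.red2 (h : Adm f (insert j T) O C) (hj : j ∉ T) {B} (hB : B ∈ O) (hjB : j ∈ B)
    (hne : B ≠ {j}) : Adm f T (insert (B.erase j) (O.erase B)) C := by
  have hn : ∀ B', (B' ∈ O ∨ B' ∈ C) → j ∈ B' → B' = B := fun B' hB' hj' =>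
    h.uniq B' hB' B (Or.inl hB) j hj' hjB
  have hN : ∃ v, v ∈ B.erase j := by
    by_contra! hh
    exact hne (Finset.eq_singleton_iff_unique_mem.2 ⟨hjB, fun x hx => by_contra fun h' => hh x (Finset.mem_erase.2 ⟨h', hx⟩)⟩)
  obtain ⟨h1, h2, h3, h4, h5, h6, h7⟩ := h
  have hsub : ∀ B', (B' ∈ O ∨ B' ∈ C) → B' ≠ B → B' ⊆ T := by
    intro B' hB' h'
    have : j ∉ B' := by grind
    have := h2 B' hB'
    grind
  have hsub' : B.erase j ⊆ T := by
    have := h2 B (Or.inl hB)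
    grind
  obtain ⟨v, hv⟩ := hN
  constructor
  · grind
  · grind
  · grind
  · intro i hi
    obtain ⟨B', hB1, hB2⟩ := h4 i (by grind)
    by_cases e : B' = B
    · exact ⟨B.erase j, by grind, by grind⟩
    · exact ⟨B', by grind, hB2⟩
  · grind
  · grind
  · grind

/-- Undoes `Adm.ext3`. What is left of the closed block is nonempty since closed blocks are not
singletons, and it becomes open. -/
lemma Adm.red3 (h : Adm f (insert j T) O C) (hj : j ∉ T) {B} (hB : B ∈ C) (hjB : j ∈ B) :
    Adm f T (insert (B.erase j) O) (C.erase B) := by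
  have hn : ∀ B', (B' ∈ O ∨ B' ∈ C) → j ∈ B' → B' = B := fun B' hB' hj' =>
    h.uniq B' hB' B (Or.inr hB) j hj' hjB
  have hN : ∃ v, v ∈ B.erase j := by
    by_contra! hh
    exact h.card B hB j (Finset.eq_singleton_iff_unique_mem.2 ⟨hjB, fun x hx => by_contra fun h' => hh x (Finset.mem_erase.2 ⟨h', hx⟩)⟩)
  obtain ⟨h1, h2, h3, h4, h5, h6, h7⟩ := h
  have hsub : ∀ B', (B' ∈ O ∨ B' ∈ C) → B' ≠ B → B' ⊆ T := by
    intro B' hB' h'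
    have : j ∉ B' := by grind
    have := h2 B' hB'
    grind
  have hsub' : B.erase j ⊆ T := by
    have := h2 B (Or.inr hB)
    grind
  obtain ⟨v, hv⟩ := hN
  constructor
  · grind
  · grind
  · grind
  · intro i hi
    obtain ⟨B', hB1, hB2⟩ := h4 i (by grind)
    by_cases e : B' = B
    · exact ⟨B.erase j, by grind, by grind⟩
    · exact ⟨B', by grind, hB2⟩
  · grind
  · grind
  · grind

end

/-- The finite set of all coloured incomplete partitions of `T`, as pairs (open blocks, closed
blocks). -/
def AdmSet {n : ℕ} {κ : Type*} (f : Fin n → κ) (T : Finset (Fin n)) :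
    Finset (Finset (Finset (Fin n)) × Finset (Finset (Fin n))) :=
  Finset.univ.filter fun p : Finset (Finset (Fin n)) × Finset (Finset (Fin n)) => Adm f T p.1 p.2

lemma mem_admSet {n : ℕ} {κ : Type*} {f : Fin n → κ} {T : Finset (Fin n)}
    {p : Finset (Finset (Fin n)) × Finset (Finset (Fin n))} :
    p ∈ AdmSet f T ↔ Adm f T p.1 p.2 := by
  simp [AdmSet]

/-- Insertion of a point `j`, at an arbitrary position relative to `T`: an incomplete partition of
`insert j T` is obtained in exactly one way from one of `T`, either by adding the open singleton
`{j}`, or by putting `j` into an open block `V` without element of the same colour and then leaving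
that block open or closing it. No point ever joins a closed block: a closed block through `j`
arises from an open one. -/
lemma sum_admSet_insert {n : ℕ} {κ : Type*} {f : Fin n → κ} {T : Finset (Fin n)} {j : Fin n}
    (hj : j ∉ T) {N : Type*} [AddCommMonoid N]
    (F : Finset (Finset (Fin n)) → Finset (Finset (Fin n)) → N) :
    ∑ p ∈ AdmSet f (insert j T), F p.1 p.2 =
      ∑ p ∈ AdmSet f T, (F (insert {j} p.1) p.2 +
        ∑ V ∈ p.1.filter (fun V => ∀ v ∈ V, f v ≠ f j),
          (F (insert (insert j V) (p.1.erase V)) p.2 +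
            F (p.1.erase V) (insert (insert j V) p.2))) := by
  -- `{j}` is an open block
  have s1 : ∑ p ∈ (AdmSet f (insert j T)).filter (fun p => {j} ∈ p.1), F p.1 p.2 =
      ∑ p ∈ AdmSet f T, F (insert {j} p.1) p.2 := by
    symm
    refine Finset.sum_bij (fun p _ => (insert {j} p.1, p.2)) ?_ ?_ ?_ (fun _ _ => rfl)
    · intro p hp
      rw [mem_admSet] at hp
      rw [Finset.mem_filter, mem_admSet]
      exact ⟨hp.ext1 hj, by simp⟩
    · rintro ⟨O, C⟩ hp ⟨O', C'⟩ hp' h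
      rw [mem_admSet] at hp hp'
      have h1 : {j} ∉ O := fun h => hp.notMem hj (Or.inl h) (by simp)
      have h2 : {j} ∉ O' := fun h => hp'.notMem hj (Or.inl h) (by simp)
      simp only [Prod.mk.injEq] at h ⊢
      refine ⟨?_, h.2⟩
      rw [← Finset.erase_insert h1, h.1, Finset.erase_insert h2]
    · rintro ⟨O, C⟩ hp
      rw [Finset.mem_filter, mem_admSet] at hp
      refine ⟨(O.erase {j}, C), mem_admSet.2 (hp.1.red1 hj hp.2), ?_⟩
      simp only [Finset.insert_erase hp.2]
  -- `j` lies in a larger open block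
  have s2 : ∑ p ∈ (AdmSet f (insert j T)).filter (fun p => ∃ B ∈ p.1, j ∈ B ∧ B ≠ {j}),
        F p.1 p.2 =
      ∑ p ∈ AdmSet f T, ∑ V ∈ p.1.filter (fun V => ∀ v ∈ V, f v ≠ f j),
          F (insert (insert j V) (p.1.erase V)) p.2 := by
    rw [Finset.sum_sigma']
    symm
    refine Finset.sum_bij (fun p _ => (insert (insert j p.2) (p.1.1.erase p.2), p.1.2))
      ?_ ?_ ?_ (fun _ _ => rfl)
    · rintro ⟨⟨O, C⟩, V⟩ hp
      rw [Finset.mem_sigma, mem_admSet, Finset.mem_filter] at hp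
      obtain ⟨hp, hV, hf⟩ := hp
      rw [Finset.mem_filter, mem_admSet]
      refine ⟨hp.ext2 hj hV hf, insert j V, by simp, by simp, ?_⟩
      obtain ⟨v, hv⟩ := hp.ne V (Or.inl hV)
      intro e
      have hvj : v ∈ ({j} : Finset (Fin n)) := e ▸ Finset.mem_insert_of_mem hv
      exact hf v hv (by rw [Finset.mem_singleton.1 hvj])
    · rintro ⟨⟨O, C⟩, V⟩ hp ⟨⟨O', C'⟩, V'⟩ hp' h
      rw [Finset.mem_sigma, mem_admSet, Finset.mem_filter] at hp hp'
      obtain ⟨hp, hV, hf⟩ := hp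
      obtain ⟨hp', hV', hf'⟩ := hp'
      dsimp only at hp hp' hV hV' h
      have h1 := fun B => hp.notMem hj (B := B)
      have h2 := fun B => hp'.notMem hj (B := B)
      simp only [Prod.mk.injEq] at h
      obtain ⟨h, rfl⟩ := h
      have hj1 := h1 V (Or.inl hV)
      have hj2 := h2 V' (Or.inl hV')
      have e : insert j V = insert j V' := by
        have : insert j V ∈ insert (insert j V') (O'.erase V') := by rw [← h]; simp
        grind
      have e2 : V = V' := by rw [← Finset.erase_insert hj1, e, Finset.erase_insert hj2]
      subst e2
      have e3 : O = O' := by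
        have n1 : insert j V ∉ O.erase V := fun h' => h1 _ (Or.inl (Finset.mem_of_mem_erase h')) (by simp)
        have n2 : insert j V ∉ O'.erase V := fun h' => h2 _ (Or.inl (Finset.mem_of_mem_erase h')) (by simp)
        have : O.erase V = O'.erase V := by
          rw [← Finset.erase_insert n1, h, Finset.erase_insert n2]
        rw [← Finset.insert_erase hV, this, Finset.insert_erase hV']
      subst e3
      rfl
    · rintro ⟨O, C⟩ hp
      rw [Finset.mem_filter, mem_admSet] at hp
      obtain ⟨hp, B, hB, hjB, hne⟩ := hp
      dsimp only at hp hB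
      have hn : B.erase j ∉ O.erase B := by
        intro h'
        have hne' : (B.erase j).Nonempty :=
          (hp.red2 hj hB hjB hne).ne _ (Or.inl (by simp))
        obtain ⟨v, hv⟩ := hne'
        have := hp.uniq B (Or.inl hB) (B.erase j) (Or.inl (Finset.mem_of_mem_erase h')) v
          (Finset.mem_of_mem_erase hv) hv
        grind
      refine ⟨⟨(insert (B.erase j) (O.erase B), C), B.erase j⟩, ?_, ?_⟩
      · rw [Finset.mem_sigma, mem_admSet, Finset.mem_filter]
        refine ⟨hp.red2 hj hB hjB hne, by simp, ?_⟩
        intro v hv hfv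
        have := hp.inj B (Or.inl hB) v (Finset.mem_of_mem_erase hv) j hjB hfv
        grind
      · dsimp only
        rw [Finset.insert_erase hjB, Finset.erase_insert hn, Finset.insert_erase hB]
  -- `j` lies in a closed block
  have s3 : ∑ p ∈ (AdmSet f (insert j T)).filter (fun p => ∃ B ∈ p.2, j ∈ B),
        F p.1 p.2 =
      ∑ p ∈ AdmSet f T, ∑ V ∈ p.1.filter (fun V => ∀ v ∈ V, f v ≠ f j),
          F (p.1.erase V) (insert (insert j V) p.2) := by
    rw [Finset.sum_sigma']
    symm
    refine Finset.sum_bij (fun p _ => (p.1.1.erase p.2, insert (insert j p.2) p.1.2))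
      ?_ ?_ ?_ (fun _ _ => rfl)
    · rintro ⟨⟨O, C⟩, V⟩ hp
      rw [Finset.mem_sigma, mem_admSet, Finset.mem_filter] at hp
      obtain ⟨hp, hV, hf⟩ := hp
      rw [Finset.mem_filter, mem_admSet]
      exact ⟨hp.ext3 hj hV hf, insert j V, by simp, by simp⟩
    · rintro ⟨⟨O, C⟩, V⟩ hp ⟨⟨O', C'⟩, V'⟩ hp' h
      rw [Finset.mem_sigma, mem_admSet, Finset.mem_filter] at hp hp'
      obtain ⟨hp, hV, hf⟩ := hp
      obtain ⟨hp', hV', hf'⟩ := hp'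
      dsimp only at hp hp' hV hV' h
      have h1 := fun B => hp.notMem hj (B := B)
      have h2 := fun B => hp'.notMem hj (B := B)
      simp only [Prod.mk.injEq] at h
      obtain ⟨h', h⟩ := h
      have hj1 := h1 V (Or.inl hV)
      have hj2 := h2 V' (Or.inl hV')
      have e : insert j V = insert j V' := by
        have : insert j V ∈ insert (insert j V') C' := by rw [← h]; simp
        grind
      have e2 : V = V' := by rw [← Finset.erase_insert hj1, e, Finset.erase_insert hj2]
      subst e2
      have e3 : O = O' := by
        rw [← Finset.insert_erase hV, h', Finset.insert_erase hV']
      have e4 : C = C' := by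
        have n1 : insert j V ∉ C := fun h' => h1 _ (Or.inr h') (by simp)
        have n2 : insert j V ∉ C' := fun h' => h2 _ (Or.inr h') (by simp)
        rw [← Finset.erase_insert n1, h, Finset.erase_insert n2]
      subst e3 e4
      rfl
    · rintro ⟨O, C⟩ hp
      rw [Finset.mem_filter, mem_admSet] at hp
      obtain ⟨hp, B, hB, hjB⟩ := hp
      dsimp only at hp hB
      have hn : B.erase j ∉ O := by
        intro h'
        have hne' : (B.erase j).Nonempty :=
          (hp.red3 hj hB hjB).ne _ (Or.inl (by simp))
        obtain ⟨v, hv⟩ := hne'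
        have := hp.uniq B (Or.inr hB) (B.erase j) (Or.inl h') v
          (Finset.mem_of_mem_erase hv) hv
        grind
      refine ⟨⟨(insert (B.erase j) O, C.erase B), B.erase j⟩, ?_, ?_⟩
      · rw [Finset.mem_sigma, mem_admSet, Finset.mem_filter]
        refine ⟨hp.red3 hj hB hjB, by simp, ?_⟩
        intro v hv hfv
        have := hp.inj B (Or.inr hB) v (Finset.mem_of_mem_erase hv) j hjB hfv
        grind
      · dsimp only
        rw [Finset.insert_erase hjB, Finset.erase_insert hn, Finset.insert_erase hB]
  simp only [Finset.sum_add_distrib]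
  rw [← s1, ← s2, ← s3, ← Finset.sum_filter_add_sum_filter_not _ (fun p => {j} ∈ p.1)]
  congr 1
  rw [← Finset.sum_filter_add_sum_filter_not _ (fun p => ∃ B ∈ p.2, j ∈ B), add_comm,
    Finset.filter_filter, Finset.filter_filter]
  congr 1
  · refine Finset.sum_congr (Finset.filter_congr ?_) fun _ _ => rfl
    rintro ⟨O, C⟩ hp
    rw [mem_admSet] at hp
    dsimp only at hp ⊢
    obtain ⟨B, hB, hjB⟩ := hp.cov j (by simp)
    constructor
    · rintro ⟨h1, h2⟩
      have hB' : B ∈ O := by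
        rcases hB with hB | hB
        · exact hB
        · exact absurd ⟨B, hB, hjB⟩ h2
      exact ⟨B, hB', hjB, fun e => h1 (e ▸ hB')⟩
    · rintro ⟨B', hB', hj', hne⟩
      refine ⟨fun h => hne (hp.uniq _ (Or.inl hB') _ (Or.inl h) j hj' (by simp)), ?_⟩
      rintro ⟨B2, hB2, hj2⟩
      have := hp.uniq _ (Or.inl hB') _ (Or.inr hB2) j hj' hj2
      exact hp.disj B' hB' (this ▸ hB2)
  · refine Finset.sum_congr (Finset.filter_congr ?_) fun _ _ => rfl
    rintro ⟨O, C⟩ hp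
    rw [mem_admSet] at hp
    dsimp only at hp ⊢
    constructor
    · rintro ⟨h1, h2⟩
      exact h2
    · rintro ⟨B, hB, hjB⟩
      refine ⟨fun h => ?_, B, hB, hjB⟩
      have := hp.uniq _ (Or.inl h) _ (Or.inr hB) j (by simp) hjB
      exact hp.disj _ h (this ▸ hB)

/-! ### Sums over incomplete partitions -/

/-- The colexicographic order on finite sets, as a relation because `≤` on `Finset` is inclusion.
On disjoint nonempty sets it compares largest elements. -/
def cle {n : ℕ} (A B : Finset (Fin n)) : Prop := toColex A ≤ toColex B

instance {n : ℕ} : IsTrans (Finset (Fin n)) cle := ⟨fun _ _ _ h h' => le_trans h h'⟩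
instance {n : ℕ} : Std.Antisymm (cle (n := n)) :=
  ⟨fun _ _ h h' => toColex_inj.1 (le_antisymm h h')⟩
instance {n : ℕ} : Std.Total (cle (n := n)) := ⟨fun _ _ => le_total _ _⟩

lemma cle_of_forall_lt {n : ℕ} {A B : Finset (Fin n)} {x : Fin n} (hx : x ∈ B)
    (h : ∀ y ∈ A, y < x) : cle A B := by
  refine Finset.Colex.toColex_le_toColex.2 ?_
  intro y hy _
  exact ⟨x, hx, fun hxA => lt_irrefl _ (h x hxA), (h y hy).le⟩

/-- The products `a_B` over the blocks `B ∈ O`, listed in colexicographic order of the blocks. -/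
def blockList {M : Type*} [CommRing M] {n : ℕ} (a : Fin n → M)
    (O : Finset (Finset (Fin n))) : List M :=
  (O.sort cle).map fun B => ∏ i ∈ B, a i

lemma blockList_congr {M : Type*} [CommRing M] {n : ℕ} {a a' : Fin n → M} {O : Finset (Finset (Fin n))}
    (h : ∀ B ∈ O, ∀ i ∈ B, a i = a' i) : blockList a O = blockList a' O := by
  refine List.map_congr_left fun B hB => ?_
  exact Finset.prod_congr rfl fun i hi => h B (by simpa using hB) i hi

/-- A block containing a point above all others comes last. -/
lemma blockList_insert {M : Type*} [CommRing M] {n : ℕ} {a : Fin n → M} {O : Finset (Finset (Fin n))} {B : Finset (Fin n)}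
    {x : Fin n} (hx : x ∈ B) (h : ∀ A ∈ O, ∀ y ∈ A, y < x) :
    blockList a (insert B O) = blockList a O ++ [∏ i ∈ B, a i] := by
  unfold blockList
  rw [sort_insert_last cle O B]
  · simp
  · intro hB
    exact lt_irrefl _ (h B hB x hx)
  · intro A hA
    exact cle_of_forall_lt hx (h A hA)

section
variable {M : Type*} [CommRing M] [Algebra ℂ M] (E : M →ₗ[ℂ] ℂ)
  (w : List M → TensorAlgebra ℂ M) {n : ℕ} {κ : Type*} (f : Fin n → κ)

/-- The scalar `∏ E(a_U)` over the closed blocks `U`. -/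
def closedWeight (a : Fin n → M) (C : Finset (Finset (Fin n))) : ℂ :=
  ∏ U ∈ C, E (∏ i ∈ U, a i)

/-- The right-hand side of the product formula, for the coloured incomplete partitions of an
arbitrary finite set `T`. -/
def partSum (T : Finset (Fin n)) (a : Fin n → M) : TensorAlgebra ℂ M :=
  ∑ p ∈ AdmSet f T, closedWeight E a p.2 • w (blockList a p.1)

/-- The contribution of a new top point of value `y` joining the open block `V ∈ O`: `V` either
stays open, and then comes last, or is closed. Summed over all `V ∈ O`, these are the
subtracted sums in the recursion for `W`. -/
def mergeTerm (a : Fin n → M) (y : M) (O : Finset (Finset (Fin n))) (V : Finset (Fin n)) :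
    TensorAlgebra ℂ M :=
  w (blockList a (O.erase V) ++ [(∏ i ∈ V, a i) * y]) +
    E ((∏ i ∈ V, a i) * y) • w (blockList a (O.erase V))

variable {E w f}

lemma closedWeight_congr {a a' : Fin n → M} {C : Finset (Finset (Fin n))}
    (h : ∀ B ∈ C, ∀ i ∈ B, a i = a' i) : closedWeight E a C = closedWeight E a' C := by
  refine Finset.prod_congr rfl fun B hB => ?_
  rw [Finset.prod_congr rfl fun i hi => h B hB i hi]

lemma partSum_congr {a a' : Fin n → M} {T : Finset (Fin n)} (h : ∀ i ∈ T, a i = a' i) :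
    partSum E w f T a = partSum E w f T a' := by
  refine Finset.sum_congr rfl fun p hp => ?_
  rw [mem_admSet] at hp
  rw [closedWeight_congr fun B hB i hi => h i (hp.sub B (Or.inr hB) hi),
    blockList_congr fun B hB i hi => h i (hp.sub B (Or.inl hB) hi)]

/-- The insertion lemma for a new largest point `x`, whose value is set to `y`. The value is left
free because a smaller point of the same colour is later absorbed into it. -/
lemma partSum_insert_last {T : Finset (Fin n)} {x : Fin n} (hx : ∀ t ∈ T, t < x)
    (a : Fin n → M) (y : M) :
    partSum E w f (insert x T) (Function.update a x y) =
      ∑ p ∈ AdmSet f T, closedWeight E a p.2 • (w (blockList a p.1 ++ [y]) +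
        ∑ V ∈ p.1.filter (fun V => ∀ v ∈ V, f v ≠ f x), mergeTerm E w a y p.1 V) := by
  have hxT : x ∉ T := fun h => lt_irrefl _ (hx x h)
  unfold partSum
  rw [sum_admSet_insert hxT (fun O C => closedWeight E (Function.update a x y) C •
    w (blockList (Function.update a x y) O))]
  refine Finset.sum_congr rfl ?_
  rintro ⟨O, C⟩ hp
  rw [mem_admSet] at hp
  dsimp only at hp ⊢
  have hO : ∀ B ∈ O, ∀ i ∈ B, i < x := fun B hB i hi => hx i (hp.sub B (Or.inl hB) hi)
  have hC : ∀ B ∈ C, ∀ i ∈ B, i < x := fun B hB i hi => hx i (hp.sub B (Or.inr hB) hi)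
  have hu : ∀ i, i < x → Function.update a x y i = a i := fun i hi =>
    Function.update_of_ne hi.ne _ _
  have eC : closedWeight E (Function.update a x y) C = closedWeight E a C :=
    closedWeight_congr fun B hB i hi => hu i (hC B hB i hi)
  have eO : ∀ O' ⊆ O, blockList (Function.update a x y) O' = blockList a O' := fun O' hO' =>
    blockList_congr fun B hB i hi => hu i (hO B (hO' hB) i hi)
  rw [smul_add, Finset.smul_sum]
  congr 1
  · rw [eC, blockList_insert (Finset.mem_singleton_self x) hO, eO O subset_rfl]
    simp
  · refine Finset.sum_congr rfl fun V hV => ?_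
    obtain ⟨hV, -⟩ := Finset.mem_filter.1 hV
    have hxV : x ∉ V := fun h => lt_irrefl _ (hO V hV x h)
    have hprod : ∏ i ∈ insert x V, Function.update a x y i = (∏ i ∈ V, a i) * y := by
      rw [Finset.prod_insert hxV, Function.update_self, mul_comm]
      congr 1
      exact Finset.prod_congr rfl fun i hi => hu i (hO V hV i hi)
    have hnC : insert x V ∉ C := fun h => lt_irrefl _ (hC _ h x (by simp))
    rw [eC, blockList_insert (Finset.mem_insert_self x V)
      (fun A hA => hO A (Finset.mem_of_mem_erase hA)), hprod, eO _ (Finset.erase_subset _ _)]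
    have : closedWeight E (Function.update a x y) (insert (insert x V) C) =
        E ((∏ i ∈ V, a i) * y) * closedWeight E a C := by
      rw [← eC]
      unfold closedWeight
      rw [Finset.prod_insert hnC, hprod]
    rw [this, mergeTerm, smul_add, smul_smul, mul_comm (closedWeight E a C)]

/-- The recursion for `W` subtracts the merges of `x` with all open blocks, the insertion of `x`
adds those with open blocks avoiding the colour of `x`; so what stays subtracted is the merges with
open blocks in which the colour of `x` occurs. -/
lemma partSum_insert_last' (hw : WickRec E w) {T : Finset (Fin n)} {x : Fin n}
    (hx : ∀ t ∈ T, t < x) (a : Fin n → M) :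
    partSum E w f (insert x T) a =
      partSum E w f T a * TensorAlgebra.ι ℂ (a x) - E (a x) • partSum E w f T a -
      ∑ p ∈ AdmSet f T, closedWeight E a p.2 •
        ∑ V ∈ p.1.filter (fun V => ¬ ∀ v ∈ V, f v ≠ f x), mergeTerm E w a (a x) p.1 V := by
  have h := partSum_insert_last (E := E) (w := w) (f := f) hx a (a x)
  rw [Function.update_eq_self] at h
  rw [h]
  unfold partSum
  rw [Finset.sum_mul, Finset.smul_sum, ← Finset.sum_sub_distrib, ← Finset.sum_sub_distrib]
  refine Finset.sum_congr rfl fun p _ => ?_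
  have h2 : w (blockList a p.1 ++ [a x]) = w (blockList a p.1) * TensorAlgebra.ι ℂ (a x) -
      E (a x) • w (blockList a p.1) - ∑ V ∈ p.1, mergeTerm E w a (a x) p.1 V :=
    hw.sort cle p.1 (fun B => ∏ i ∈ B, a i) (a x)
  rw [h2, ← Finset.sum_filter_add_sum_filter_not p.1 (fun V => ∀ v ∈ V, f v ≠ f x),
    smul_mul_assoc, smul_comm (E (a x)), ← smul_sub, ← smul_sub]
  congr 1
  abel

/-- Merging `x` into the open block that contains `j`, where `j` and `x` have the same colour, amounts
to dropping `j` and replacing `x` by a point of value `a j * y`; when `{j}` is the block and it gets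
closed by the merge, there remains the scalar `E (a j * y)`. -/
lemma sum_mergeTerm {T : Finset (Fin n)} {j x : Fin n} (hj : j ∉ T) (hx : ∀ t ∈ T, t < x)
    (hf : f j = f x) (a : Fin n → M) (y : M) :
    ∑ p ∈ AdmSet f (insert j T), closedWeight E a p.2 •
        ∑ V ∈ p.1.filter (fun V => j ∈ V), mergeTerm E w a y p.1 V =
      partSum E w f (insert x T) (Function.update a x (a j * y)) +
        E (a j * y) • partSum E w f T a := by
  rw [sum_admSet_insert hj (fun O C => closedWeight E a C •
    ∑ V ∈ O.filter (fun V => j ∈ V), mergeTerm E w a y O V), partSum_insert_last hx, partSum,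
    Finset.smul_sum, ← Finset.sum_add_distrib]
  refine Finset.sum_congr rfl ?_
  rintro ⟨O, C⟩ hp
  rw [mem_admSet] at hp
  dsimp only at hp ⊢
  have hO : ∀ B ∈ O, j ∉ B := fun B hB => hp.notMem hj (Or.inl hB)
  have e0 : ∀ O' ⊆ O, O'.filter (fun V => j ∈ V) = ∅ := fun O' h =>
    Finset.filter_eq_empty_iff.2 fun B hB => hO B (h hB)
  have e1 : ∀ O' ⊆ O, ∀ B, j ∈ B → ∑ V ∈ (insert B O').filter (fun V => j ∈ V),
      mergeTerm E w a y (insert B O') V = w (blockList a O' ++ [(∏ i ∈ B, a i) * y]) +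
        E ((∏ i ∈ B, a i) * y) • w (blockList a O') := by
    intro O' h B hB
    rw [Finset.filter_insert, if_pos hB, e0 O' h, insert_empty_eq, Finset.sum_singleton,
      mergeTerm, Finset.erase_insert (fun h' => hO B (h h') hB)]
  rw [e1 O subset_rfl _ (Finset.mem_singleton_self j), Finset.prod_singleton,
    smul_comm (E (a j * y)), ← smul_add]
  have e2 : ∀ V ∈ O.filter (fun V => ∀ v ∈ V, f v ≠ f j),
      (closedWeight E a C • ∑ V' ∈ (insert (insert j V) (O.erase V)).filter (fun V => j ∈ V),
          mergeTerm E w a y (insert (insert j V) (O.erase V)) V' +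
        closedWeight E a (insert (insert j V) C) • ∑ V' ∈ (O.erase V).filter (fun V => j ∈ V),
          mergeTerm E w a y (O.erase V) V') =
        closedWeight E a C • mergeTerm E w a (a j * y) O V := by
    intro V hV
    obtain ⟨hV, -⟩ := Finset.mem_filter.1 hV
    rw [e1 _ (Finset.erase_subset _ _) _ (Finset.mem_insert_self j V),
      e0 _ (Finset.erase_subset _ _), Finset.sum_empty, smul_zero, add_zero,
      Finset.prod_insert (hO V hV), mul_comm (a j), mul_assoc]
    rfl
  rw [Finset.sum_congr rfl e2, ← Finset.smul_sum, ← smul_add, hf]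
  congr 1
  abel

/-- Appending to `T₀` a set `J` of larger points, all of one colour not occurring in `T₀`, multiplies
the sum by `W(a_i : i ∈ J)`. The induction on the size of `J` matches the recursion for `W` at the
largest point `x` of `J`. -/
lemma partSum_union (hw : WickRec E w) (T₀ : Finset (Fin n)) (m : ℕ) :
    ∀ (J : Finset (Fin n)) (a : Fin n → M), J.card = m →
      (∀ t ∈ T₀, ∀ j ∈ J, t < j) → (∀ i ∈ J, ∀ j ∈ J, f i = f j) →
      (∀ t ∈ T₀, ∀ j ∈ J, f t ≠ f j) →
      partSum E w f (T₀ ∪ J) a = partSum E w f T₀ a * w (J.sort.map a) := by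
  induction m using Nat.strong_induction_on with
  | _ m ih =>
  intro J a hm hlt hc hc'
  rcases J.eq_empty_or_nonempty with rfl | hJ
  · simp [hw.nil]
  obtain ⟨x, hxJ, hmax⟩ : ∃ x ∈ J, ∀ j ∈ J, j ≤ x := ⟨J.max' hJ, J.max'_mem hJ, J.le_max'⟩
  obtain ⟨J', hxJ', rfl⟩ : ∃ J', x ∉ J' ∧ J = insert x J' :=
    ⟨J.erase x, by simp, (Finset.insert_erase hxJ).symm⟩
  rw [Finset.card_insert_of_notMem hxJ'] at hm
  have hlt' : ∀ j ∈ J', j < x := fun j hj =>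
    lt_of_le_of_ne (hmax j (by simp [hj])) (fun e => hxJ' (e ▸ hj))
  have hltT : ∀ t ∈ T₀ ∪ J', t < x := by
    intro t ht
    rcases Finset.mem_union.1 ht with ht | ht
    · exact hlt t ht x (by simp)
    · exact hlt' t ht
  have ih1 := ih J'.card (by omega) J' a rfl (fun t ht j hj => hlt t ht j (by simp [hj]))
    (fun i hi j hj => hc i (by simp [hi]) j (by simp [hj]))
    (fun t ht j hj => hc' t ht j (by simp [hj]))
  have ih2 : ∀ j ∈ J', partSum E w f (T₀ ∪ J'.erase j) a =
      partSum E w f T₀ a * w ((J'.erase j).sort.map a) := by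
    intro j hj
    have hcard := Finset.card_erase_of_mem hj
    have hpos := Finset.card_pos.2 ⟨j, hj⟩
    exact ih (J'.erase j).card (by omega) _ a rfl
      (fun t ht i hi => hlt t ht i (by simp [Finset.mem_of_mem_erase hi]))
      (fun i hi i' hi' => hc i (by simp [Finset.mem_of_mem_erase hi]) i'
        (by simp [Finset.mem_of_mem_erase hi']))
      (fun t ht i hi => hc' t ht i (by simp [Finset.mem_of_mem_erase hi]))
  -- The set `insert x (J'.erase j)` has one point less than `insert x J'`, so the induction
  -- hypothesis applies to it for every value of the top point.
  have ih3 : ∀ j ∈ J', ∀ y, partSum E w f (insert x (T₀ ∪ J'.erase j)) (Function.update a x y) =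
      partSum E w f T₀ a * w ((J'.erase j).sort.map a ++ [y]) := by
    intro j hj y
    have hcard := Finset.card_erase_of_mem hj
    have hpos := Finset.card_pos.2 ⟨j, hj⟩
    have hxe : x ∉ J'.erase j := fun h => hxJ' (Finset.mem_of_mem_erase h)
    have hsub : ∀ i ∈ insert x (J'.erase j), i ∈ insert x J' := fun i hi =>
      Finset.insert_subset_insert x (Finset.erase_subset j J') hi
    have := ih (insert x (J'.erase j)).card
      (by rw [Finset.card_insert_of_notMem hxe]; omega) _ (Function.update a x y) rfl
      (fun t ht i hi => hlt t ht i (hsub i hi))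
      (fun i hi i' hi' => hc i (hsub i hi) i' (hsub i' hi'))
      (fun t ht i hi => hc' t ht i (hsub i hi))
    rw [← Finset.union_insert, this, sort_insert_last (· ≤ ·) _ _ hxe
      (fun i hi => (hlt' i (Finset.mem_of_mem_erase hi)).le)]
    congr 1
    · exact partSum_congr fun i hi => Function.update_of_ne (hlt i hi x (by simp)).ne _ _
    · rw [List.map_append]
      congr 2
      · refine List.map_congr_left fun i hi => Function.update_of_ne ?_ _ _
        rw [Finset.mem_sort] at hi
        exact (hlt' i (Finset.mem_of_mem_erase hi)).ne
      · simp
  -- An open block in which the colour of `x` occurs contains exactly one point `j` of `J'`.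
  have key : ∀ p ∈ AdmSet f (T₀ ∪ J'),
      ∑ V ∈ p.1.filter (fun V => ¬ ∀ v ∈ V, f v ≠ f x), mergeTerm E w a (a x) p.1 V =
      ∑ j ∈ J', ∑ V ∈ p.1.filter (fun V => j ∈ V), mergeTerm E w a (a x) p.1 V := by
    rintro ⟨O, C⟩ hp
    rw [mem_admSet] at hp
    dsimp only at hp ⊢
    rw [← Finset.sum_biUnion]
    · refine Finset.sum_congr ?_ fun _ _ => rfl
      ext V
      simp only [Finset.mem_filter, Finset.mem_biUnion]
      constructor
      · rintro ⟨hV, h⟩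
        push Not at h
        obtain ⟨v, hv, hfv⟩ := h
        refine ⟨v, ?_, hV, hv⟩
        rcases Finset.mem_union.1 (hp.sub V (Or.inl hV) hv) with h | h
        · exact absurd hfv (hc' v h x (by simp))
        · exact h
      · rintro ⟨j, hj, hV, hjV⟩
        exact ⟨hV, fun h => h j hjV (hc j (by simp [hj]) x (by simp))⟩
    · intro j hj j' hj' hne
      rw [Function.onFun, Finset.disjoint_left]
      intro V hV hV'
      rw [Finset.mem_filter] at hV hV'
      exact hne (hp.inj V (Or.inl hV.1) j hV.2 j' hV'.2
        (hc j (Finset.mem_insert_of_mem hj) j' (Finset.mem_insert_of_mem hj')))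
  have key2 : ∀ j ∈ J', ∑ p ∈ AdmSet f (T₀ ∪ J'), closedWeight E a p.2 •
        ∑ V ∈ p.1.filter (fun V => j ∈ V), mergeTerm E w a (a x) p.1 V =
      partSum E w f T₀ a * (w ((J'.erase j).sort.map a ++ [a j * a x]) +
        E (a j * a x) • w ((J'.erase j).sort.map a)) := by
    intro j hj
    have hjT : j ∉ T₀ ∪ J'.erase j := by
      simp only [Finset.mem_union, Finset.mem_erase, ne_eq, not_true_eq_false, false_and, or_false]
      exact fun h => lt_irrefl _ (hlt j h j (by simp [hj]))
    have e : T₀ ∪ J' = insert j (T₀ ∪ J'.erase j) := by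
      rw [← Finset.union_insert, Finset.insert_erase hj]
    rw [e, sum_mergeTerm hjT (x := x) (fun t ht => hltT t (by rw [e]; simp [ht]))
      (hc j (by simp [hj]) x (by simp)), ih2 j hj, ih3 j hj, mul_add, mul_smul_comm]
  rw [Finset.union_insert, partSum_insert_last' hw hltT,
    Finset.sum_congr rfl fun p hp => by rw [key p hp, Finset.smul_sum], Finset.sum_comm,
    Finset.sum_congr rfl key2, ← Finset.mul_sum, ih1,
    sort_insert_last (· ≤ ·) _ _ hxJ' (fun i hi => (hlt' i hi).le), List.map_append,
    List.map_singleton, hw.sort (· ≤ ·) J' a (a x)]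
  rw [mul_sub, mul_sub, mul_smul_comm, mul_assoc]

end

/-! ### Blocks ordered by their largest elements -/

lemma aProd_eq {M : Type*} [CommRing M] {n : ℕ} (a : Fin n → M) (B : Finset (Fin n)) :
    aProd a B = ∏ i ∈ B, a i := by
  unfold aProd
  rw [← Multiset.prod_coe, ← Multiset.map_coe, Finset.sort_eq]
  rfl

lemma blockOf_eq {n : ℕ} {S : Finset (Finset (Fin n))}
    (hu : ∀ B ∈ S, ∀ B' ∈ S, ∀ i ∈ B, i ∈ B' → B = B') {B : Finset (Fin n)} (hB : B ∈ S)
    {i : Fin n} (hi : i ∈ B) : blockOf S i = B := by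
  ext x
  simp only [blockOf, Finset.mem_filter, Finset.mem_univ, true_and]
  constructor
  · rintro ⟨B', hB', hi', hx⟩
    exact hu B hB B' hB' i hi hi' ▸ hx
  · exact fun hx => ⟨B, hB, hi, hx⟩

/-- For disjoint nonempty blocks, the order by largest elements is the colexicographic order. -/
lemma maxElts_map_blockOf {n : ℕ} {S : Finset (Finset (Fin n))} (hne : ∀ B ∈ S, B.Nonempty)
    (hu : ∀ B ∈ S, ∀ B' ∈ S, ∀ i ∈ B, i ∈ B' → B = B') :
    (maxElts S).map (blockOf S) = S.sort cle := by
  have hmem : ∀ i, i ∈ maxElts S ↔ ∃ B ∈ S, i ∈ B ∧ ∀ x ∈ B, x ≤ i := by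
    intro i
    simp [maxElts]
  have hlt : (maxElts S).Pairwise (· < ·) := (Finset.sortedLT_sort _).pairwise
  apply List.Perm.eq_of_pairwise' (r := cle) _ (Finset.pairwise_sort _ _)
  · rw [List.perm_ext_iff_of_nodup _ (Finset.sort_nodup _ _)]
    · intro B
      rw [List.mem_map, Finset.mem_sort]
      constructor
      · rintro ⟨i, hi, rfl⟩
        obtain ⟨B, hB, hiB, -⟩ := (hmem i).1 hi
        rwa [blockOf_eq hu hB hiB]
      · intro hB
        exact ⟨B.max' (hne B hB), (hmem _).2 ⟨B, hB, B.max'_mem _, B.le_max'⟩,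
          blockOf_eq hu hB (B.max'_mem _)⟩
    · refine List.Nodup.map_on ?_ (Finset.sort_nodup _ _)
      intro i hi j hj e
      obtain ⟨B, hB, hiB, hi'⟩ := (hmem i).1 hi
      obtain ⟨B', hB', hjB, hj'⟩ := (hmem j).1 hj
      rw [blockOf_eq hu hB hiB, blockOf_eq hu hB' hjB] at e
      subst e
      exact le_antisymm (hj' i hiB) (hi' j hjB)
  · rw [List.pairwise_map]
    refine hlt.imp_of_mem ?_
    intro i j hi hj hij
    obtain ⟨B, hB, hiB, hi'⟩ := (hmem i).1 hi
    obtain ⟨B', hB', hjB, hj'⟩ := (hmem j).1 hj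
    rw [blockOf_eq hu hB hiB, blockOf_eq hu hB' hjB]
    exact cle_of_forall_lt hjB fun y hy => (hi' y hy).trans_lt hij

/-! ### The consecutive intervals and the product formula -/

lemma offset_add_le {k : ℕ} (s : Fin k → ℕ) {r r' : Fin k} (h : r < r') :
    offset s r + s r ≤ offset s r' := by
  unfold offset
  rw [add_comm, ← Finset.sum_insert (s := Finset.univ.filter fun i => i < r) (by simp)]
  apply Finset.sum_le_sum_of_subset
  intro i hi
  simp only [Finset.mem_insert, Finset.mem_filter, Finset.mem_univ, true_and] at hi ⊢
  rcases hi with rfl | hi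
  · exact h
  · exact hi.trans h

lemma mem_Jset {k : ℕ} {s : Fin k → ℕ} {n : ℕ} {r : Fin k} {i : Fin n} :
    i ∈ Jset s n r ↔ offset s r ≤ i.val ∧ i.val < offset s r + s r := by
  simp [Jset]

lemma Jset_lt {k : ℕ} {s : Fin k → ℕ} {n : ℕ} {r r' : Fin k} (h : r < r') {i j : Fin n}
    (hi : i ∈ Jset s n r) (hj : j ∈ Jset s n r') : i < j := by
  rw [mem_Jset] at hi hj
  have := offset_add_le s h
  rw [Fin.lt_def]
  omega

lemma Jset_unique {k : ℕ} {s : Fin k → ℕ} {n : ℕ} {r r' : Fin k} {i : Fin n}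
    (hi : i ∈ Jset s n r) (hj : i ∈ Jset s n r') : r = r' := by
  rcases lt_trichotomy r r' with h | h | h
  · exact absurd (Jset_lt h hi hj) (lt_irrefl _)
  · exact h
  · exact absurd (Jset_lt h hj hi) (lt_irrefl _)

lemma Jset_cover {k : ℕ} {s : Fin k → ℕ} {n : ℕ} (hn : n = ∑ i, s i) (i : Fin n) :
    ∃ r, i ∈ Jset s n r := by
  have key : ∀ m, i.val < ∑ r ∈ Finset.univ.filter (fun r : Fin k => r.val < m), s r →
      ∃ r, i ∈ Jset s n r := by
    intro m
    induction m with
    | zero => simp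
    | succ m ih =>
      intro h
      by_cases hm : m < k
      · have e : Finset.univ.filter (fun r : Fin k => r.val < m + 1) =
            insert ⟨m, hm⟩ (Finset.univ.filter (fun r : Fin k => r.val < m)) := by
          ext r
          simp [Fin.ext_iff]
          omega
        rw [e, Finset.sum_insert (by simp)] at h
        by_cases h' : i.val < ∑ r ∈ Finset.univ.filter (fun r : Fin k => r.val < m), s r
        · exact ih h'
        · refine ⟨⟨m, hm⟩, mem_Jset.2 ?_⟩
          have : offset s ⟨m, hm⟩ = ∑ r ∈ Finset.univ.filter (fun r : Fin k => r.val < m), s r :=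
            rfl
          omega
      · apply ih
        convert h using 2
        ext r
        have := r.isLt
        simp
        omega
  apply key k
  have : Finset.univ.filter (fun r : Fin k => r.val < k) = Finset.univ := by
    ext r
    simp
  rw [this, ← hn]
  exact i.isLt

lemma ofFn_interval {M : Type*} {k : ℕ} (s : Fin k → ℕ) (n : ℕ) (hn : n = ∑ i, s i)
    (a : Fin n → M) (r : Fin k) :
    List.ofFn (fun j : Fin (s r) =>
      a ⟨offset s r + j.val, by rw [hn]; exact offset_add_lt s r j.val j.isLt⟩) =
    (Jset s n r).sort.map a := by
  have h : List.ofFn (fun j : Fin (s r) =>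
      (⟨offset s r + j.val, by rw [hn]; exact offset_add_lt s r j.val j.isLt⟩ : Fin n)) =
      (Jset s n r).sort := by
    have hlt : (List.ofFn (fun j : Fin (s r) =>
      (⟨offset s r + j.val, by rw [hn]; exact offset_add_lt s r j.val j.isLt⟩ : Fin n))).Pairwise
        (· < ·) := by
      rw [List.pairwise_ofFn]
      intro i j hij
      exact Fin.lt_def.2 (Nat.add_lt_add_left hij _)
    apply List.Perm.eq_of_pairwise' (r := (· ≤ ·)) (hlt.imp le_of_lt) (Finset.pairwise_sort _ _)
    rw [List.perm_ext_iff_of_nodup (hlt.imp ne_of_lt) (Finset.sort_nodup _ _)]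
    intro i
    rw [List.mem_ofFn, Finset.mem_sort, mem_Jset]
    constructor
    · rintro ⟨j, rfl⟩
      exact ⟨Nat.le_add_right _ _, Nat.add_lt_add_left j.isLt _⟩
    · rintro ⟨h1, h2⟩
      exact ⟨⟨i.val - offset s r, by omega⟩, Fin.ext (Nat.add_sub_cancel' h1)⟩
  rw [← h, List.map_ofFn]
  rfl

/-- The product formula, with the index of the interval as the colour of a point: the intervals are
appended one after the other. -/
lemma partSum_prod {M : Type*} [CommRing M] [Algebra ℂ M] {E : M →ₗ[ℂ] ℂ}
    {w : List M → TensorAlgebra ℂ M} (hw : WickRec E w) {k : ℕ} (s : Fin k → ℕ) (n : ℕ)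
    (a : Fin n → M) (f : Fin n → Fin k) (hf : ∀ i, i ∈ Jset s n (f i)) :
    (List.ofFn fun r : Fin k => w ((Jset s n r).sort.map a)).prod =
      partSum E w f Finset.univ a := by
  have hf' : ∀ i r, i ∈ Jset s n r ↔ f i = r := fun i r =>
    ⟨fun h => Jset_unique (hf i) h, fun h => h ▸ hf i⟩
  have key : ∀ m ≤ k, ((List.ofFn fun r : Fin k => w ((Jset s n r).sort.map a)).take m).prod =
      partSum E w f (Finset.univ.filter fun i => (f i).val < m) a := by
    intro m
    induction m with
    | zero =>
      intro _
      have : AdmSet f (∅ : Finset (Fin n)) = {(∅, ∅)} := by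
        ext ⟨O, C⟩
        rw [mem_admSet, Finset.mem_singleton, Prod.mk.injEq]
        constructor
        · intro h
          constructor <;> refine Finset.eq_empty_of_forall_notMem fun B hB => ?_
          · obtain ⟨i, hi⟩ := h.ne B (Or.inl hB)
            exact absurd (h.sub B (Or.inl hB) hi) (by simp)
          · obtain ⟨i, hi⟩ := h.ne B (Or.inr hB)
            exact absurd (h.sub B (Or.inr hB) hi) (by simp)
        · rintro ⟨rfl, rfl⟩
          constructor <;> simp
      simp [partSum, this, closedWeight, blockList, hw.nil]
    | succ m ih =>
      intro hm
      have e : (Finset.univ.filter fun i => (f i).val < m + 1) =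
          (Finset.univ.filter fun i => (f i).val < m) ∪ Jset s n ⟨m, hm⟩ := by
        ext i
        simp only [Finset.mem_filter, Finset.mem_univ, true_and, Finset.mem_union, hf',
          Fin.ext_iff]
        omega
      rw [List.prod_take_succ _ _ (by simpa using hm), ih (by omega), e,
        partSum_union hw _ _ _ _ rfl]
      · simp
      · intro t ht j hj
        exact Jset_lt (r := f t) (r' := ⟨m, hm⟩) (by simpa [Fin.lt_def] using ht) (hf t) hj
      · intro i hi j hj
        rw [hf'] at hi hj
        rw [hi, hj]
      · intro t ht j hj h
        rw [hf'] at hj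
        rw [hj] at h
        simp [h] at ht
  have h := key k le_rfl
  rw [List.take_of_length_le (by simp)] at h
  rw [h]
  congr 1
  ext i
  simp

/-- The incomplete partitions `(π, S)` of the theorem correspond to the pairs `(S, π \ S)` of open
and closed blocks. -/
lemma sum_incomplete_eq {N : Type*} [AddCommMonoid N] {k : ℕ} (s : Fin k → ℕ) (n : ℕ)
    (f : Fin n → Fin k) (hf : ∀ i, i ∈ Jset s n (f i))
    (F : Finset (Finset (Fin n)) → Finset (Finset (Fin n)) → N) :
    ∑ π ∈ Finset.univ.filter (fun π : Finset (Finset (Fin n)) =>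
        IsPartition π ∧ ∀ B ∈ π, ∀ r : Fin k, (B ∩ Jset s n r).card ≤ 1),
      ∑ S ∈ π.powerset.filter (fun S => ∀ B ∈ π, B.card = 1 → B ∈ S), F S (π \ S) =
    ∑ p ∈ AdmSet f Finset.univ, F p.1 p.2 := by
  have hf' : ∀ i r, i ∈ Jset s n r ↔ f i = r := fun i r =>
    ⟨fun h => Jset_unique (hf i) h, fun h => h ▸ hf i⟩
  rw [Finset.sum_sigma']
  refine Finset.sum_bij' (fun p _ => (p.2, p.1 \ p.2)) (fun p _ => ⟨p.1 ∪ p.2, p.1⟩)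
    ?_ ?_ ?_ ?_ (fun _ _ => rfl)
  · rintro ⟨π, S⟩ hp
    simp only [Finset.mem_sigma, Finset.mem_filter, Finset.mem_univ, true_and,
      Finset.mem_powerset] at hp
    obtain ⟨⟨⟨hne, huniq⟩, hcard⟩, hS, h1⟩ := hp
    rw [mem_admSet]
    have hmem : ∀ B, B ∈ S ∨ B ∈ π \ S ↔ B ∈ π := by
      intro B
      rw [Finset.mem_sdiff]
      constructor
      · rintro (h | h)
        · exact hS h
        · exact h.1
      · intro h
        by_cases h' : B ∈ S
        · exact Or.inl h'
        · exact Or.inr ⟨h, h'⟩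
    constructor <;> simp only [hmem]
    · exact hne
    · exact fun B _ => Finset.subset_univ B
    · intro B hB x hx y hy hxy
      refine Finset.card_le_one.1 (hcard B hB (f x)) x ?_ y ?_
      · rw [Finset.mem_inter, hf']
        exact ⟨hx, rfl⟩
      · rw [Finset.mem_inter, hf']
        exact ⟨hy, hxy.symm⟩
    · intro i _
      exact (huniq i).exists
    · intro B hB B' hB' i hi hi'
      exact (huniq i).unique ⟨hB, hi⟩ ⟨hB', hi'⟩
    · intro B hB h
      exact (Finset.mem_sdiff.1 h).2 hB
    · rintro B hB x rfl
      exact (Finset.mem_sdiff.1 hB).2 (h1 _ (Finset.mem_sdiff.1 hB).1 (by simp))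
  · rintro ⟨O, C⟩ hp
    rw [mem_admSet] at hp
    dsimp only at hp
    simp only [Finset.mem_sigma, Finset.mem_filter, Finset.mem_univ, true_and,
      Finset.mem_powerset]
    refine ⟨⟨⟨?_, ?_⟩, ?_⟩, Finset.subset_union_left, ?_⟩ <;>
      simp only [Finset.mem_union]
    · exact hp.ne
    · intro i
      obtain ⟨B, hB, hi⟩ := hp.cov i (Finset.mem_univ i)
      exact ⟨B, ⟨hB, hi⟩, fun B' h' => hp.uniq B' h'.1 B hB i h'.2 hi⟩
    · intro B hB r
      refine Finset.card_le_one.2 fun x hx y hy => ?_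
      rw [Finset.mem_inter, hf'] at hx hy
      exact hp.inj B hB x hx.1 y hy.1 (hx.2.trans hy.2.symm)
    · intro B hB h1
      obtain ⟨x, hx⟩ := Finset.card_eq_one.1 h1
      exact hB.resolve_right fun hC => hp.card B hC x hx
  · rintro ⟨π, S⟩ hp
    simp only [Finset.mem_sigma, Finset.mem_filter, Finset.mem_powerset] at hp
    dsimp only
    rw [Finset.union_sdiff_of_subset hp.2.1]
  · rintro ⟨O, C⟩ hp
    rw [mem_admSet] at hp
    have hd : Disjoint O C := Finset.disjoint_left.2 hp.disj
    dsimp only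
    rw [Finset.union_sdiff_cancel_left hd]


theorem stmt12 {M : Type*} [CommRing M] [Algebra ℂ M] (E : M →ₗ[ℂ] ℂ)
    (W : (m : ℕ) → (Fin m → M) → TensorAlgebra ℂ M)
    (hW0 : ∀ a : Fin 0 → M, W 0 a = 1)
    (hW1 : ∀ a : Fin 1 → M,
      W 1 a = W 0 (Fin.init a) * TensorAlgebra.ι ℂ (a 0)
        - E (a 0) • W 0 (Fin.init a))
    (hWrec : ∀ (m : ℕ) (a : Fin (m + 2) → M),
      W (m + 2) a =
        W (m + 1) (Fin.init a) * TensorAlgebra.ι ℂ (a (Fin.last (m + 1)))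
          - E (a (Fin.last (m + 1))) • W (m + 1) (Fin.init a)
          - ∑ i : Fin (m + 1),
              W (m + 1) (Fin.snoc (i.removeNth (Fin.init a))
                (a i.castSucc * a (Fin.last (m + 1))))
          - ∑ i : Fin (m + 1),
              E (a i.castSucc * a (Fin.last (m + 1))) • W m (i.removeNth (Fin.init a)))
    (k : ℕ) (s : Fin k → ℕ) (hs : ∀ r, 1 ≤ s r)
    (n : ℕ) (hn : n = ∑ i, s i) (a : Fin n → M) :
    (List.ofFn fun r : Fin k =>
        W (s r) (fun j : Fin (s r) =>
          a ⟨offset s r + j.val, by rw [hn]; exact offset_add_lt s r j.val j.isLt⟩)).prod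
      = ∑ π ∈ Finset.univ.filter (fun π : Finset (Finset (Fin n)) =>
            IsPartition π ∧ ∀ B ∈ π, ∀ r : Fin k, (B ∩ Jset s n r).card ≤ 1),
          ∑ S ∈ π.powerset.filter (fun S => ∀ B ∈ π, B.card = 1 → B ∈ S),
            (∏ U ∈ π \ S, E (aProd a U)) •
              W (maxElts S).length (fun j => aProd a (blockOf S ((maxElts S).get j))) := by
  have hw := wickRec_of E W hW0 hW1 hWrec
  choose f hf using fun i : Fin n => Jset_cover hn i
  have hL : ∀ r : Fin k, W (s r) (fun j : Fin (s r) =>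
      a ⟨offset s r + j.val, by rw [hn]; exact offset_add_lt s r j.val j.isLt⟩) =
      (fun l : List M => W l.length l.get) ((Jset s n r).sort.map a) := by
    intro r
    rw [list_fun_ofFn W (s r), ofFn_interval s n hn a r]
  rw [funext hL, partSum_prod hw s n a f hf, partSum]
  rw [← sum_incomplete_eq s n f hf (fun O C => closedWeight E a C •
    (fun l : List M => W l.length l.get) (blockList a O))]
  refine Finset.sum_congr rfl fun π hπ => Finset.sum_congr rfl fun S hS => ?_
  obtain ⟨-, ⟨hne, huniq⟩, -⟩ := Finset.mem_filter.1 hπ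
  have hSπ := Finset.mem_powerset.1 (Finset.mem_filter.1 hS).1
  congr 1
  · exact Finset.prod_congr rfl fun U _ => by rw [aProd_eq]
  · rw [list_fun_ofFn W (maxElts S).length]
    have e : List.ofFn (fun j => aProd a (blockOf S ((maxElts S).get j))) = blockList a S := by
      rw [blockList, ← maxElts_map_blockOf (fun B hB => hne B (hSπ hB))
        (fun B hB B' hB' i hi hi' => (huniq i).unique ⟨hSπ hB, hi⟩ ⟨hSπ hB', hi'⟩),
        List.map_map]
      conv_rhs => rw [← List.ofFn_get (maxElts S), List.map_ofFn]
      congr 1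
      funext j
      exact aProd_eq a _
    rw [e]
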